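/- arXiv:2305.06722 — 2 statements merged into one kernel-verified Lean document; each statement's English description precedes it below -/
import Mathlib

section
/- There exists C > 0 such that for every differentiable u : ℝ³ → ℂ with ∇u ∈ L²(ℝ³) and ‖u‖_{L²} = 1: the function f_u(k) = 2 k B₀(k) · ∫_{ℝ³} e^{−ik·x} \overline{u(x)} (−i∇u(x)) dx (the dot denoting the ℝ³ scalar product) satisfies sup_{k∈ℝ³} |f_u(k)| ≤ C ‖u‖_{H¹}² and ∫_{ℝ³} ω(k) |f_u(k)|² dk ≤ C ‖u‖_{H¹}⁴. -/
open MeasureTheory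
open scoped ENNReal

noncomputable section

/-- The dispersion relation `ω(k) = √(1+|k|²)` of the massive scalar field. -/
def ω (k : EuclideanSpace ℝ (Fin 3)) : ℝ := Real.sqrt (1 + ‖k‖ ^ 2)

/-- The Gross dressing form factor `B₀(k) = 1/(√(ω(k))·(|k|²+ω(k)))`. -/
def B0 (k : EuclideanSpace ℝ (Fin 3)) : ℝ := 1 / (Real.sqrt (ω k) * (‖k‖ ^ 2 + ω k))

/-- The square of the `H¹`-norm, `‖u‖_{H¹}² = ‖u‖_{L²}² + ‖∇u‖_{L²}²`. -/
def H1sq (u : EuclideanSpace ℝ (Fin 3) → ℂ) : ℝ :=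
  (∫ x, ‖u x‖ ^ 2) + ∫ x, ‖fderiv ℝ u x‖ ^ 2

/-- The `H¹`-norm of `u`. -/
def H1norm (u : EuclideanSpace ℝ (Fin 3) → ℂ) : ℝ := Real.sqrt (H1sq u)

/-- The `j`-th partial derivative of `u`. -/
def pd (u : EuclideanSpace ℝ (Fin 3) → ℂ) (j : Fin 3) (x : EuclideanSpace ℝ (Fin 3)) : ℂ :=
  fderiv ℝ u x (EuclideanSpace.single j 1)

/-- The source term `f_u(k) = 2 k B₀(k) · ∫ e^{−ik·x} \bar u(x)(−i∇u(x)) dx` of the dressed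
Schrödinger–Klein–Gordon field equation. -/
def fu (u : EuclideanSpace ℝ (Fin 3) → ℂ) (k : EuclideanSpace ℝ (Fin 3)) : ℂ :=
  ((2 * B0 k : ℝ) : ℂ) * ∑ j : Fin 3, ((k j : ℝ) : ℂ) *
    ∫ x, Complex.exp (-(Complex.I * ((inner ℝ k x : ℝ) : ℂ))) *
      (starRingEnd ℂ) (u x) * (-Complex.I * pd u j x)

/-!
With Mathlib's normalization of the Fourier transform, `f_u(k) = -2i B₀(k) ∑ⱼ kⱼ 𝓕(ū ∂ⱼu)(k / 2π)`,
and `ω B₀² |k|² ≤ (1 + |k|²)⁻¹`. The supremum bound is then `|𝓕(ū ∂ⱼu)| ≤ ‖u‖ ‖∂ⱼu‖`.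
For the integral bound, Plancherel writes `𝓕(ū ∂ⱼu)(κ)` as the correlation
`∫ conj (û(ξ - κ)) 𝓕(∂ⱼu)(ξ) dξ`. Cauchy–Schwarz with the weight `1 + |ξ - κ|²` and Tonelli leave
`‖u‖_{H¹}² ‖∂ⱼu‖²` times `sup_ξ ∫ (1 + |κ|²)⁻¹ (1 + |ξ - κ|²)⁻¹ dκ`, which is at most
`∫ (1 + |κ|²)⁻² dκ`, finite in dimension three.
-/

section LIntegral

lemma lintegral_enorm_sq_eq_ofReal_integral {α F : Type*} [MeasurableSpace α] {μ : Measure α}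
    [NormedAddCommGroup F] {f : α → F} (hf : MemLp f 2 μ) :
    ∫⁻ x, ‖f x‖ₑ ^ 2 ∂μ = ENNReal.ofReal (∫ x, ‖f x‖ ^ 2 ∂μ) := by
  rw [ofReal_integral_eq_lintegral_ofReal ((memLp_two_iff_integrable_sq_norm hf.1).1 hf)
    (.of_forall fun x => sq_nonneg _)]
  simp only [ENNReal.ofReal_pow (norm_nonneg _), ofReal_norm]

lemma sq_lintegral_le_of_sq_le_mul {α : Type*} [MeasurableSpace α] {μ : Measure α}
    {f g h : α → ℝ≥0∞} (hf : AEMeasurable f μ) (hg : AEMeasurable g μ)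
    (hfg : ∀ x, h x ^ 2 ≤ f x * g x) :
    (∫⁻ x, h x ∂μ) ^ 2 ≤ (∫⁻ x, f x ∂μ) * ∫⁻ x, g x ∂μ := by
  have sq_rpow_half (a : ℝ≥0∞) : (a ^ 2) ^ (1 / 2 : ℝ) = a := by
    rw [← ENNReal.rpow_two, ← ENNReal.rpow_mul]; norm_num
  have rpow_half_sq (a : ℝ≥0∞) : (a ^ (1 / 2 : ℝ)) ^ 2 = a := by
    rw [← ENNReal.rpow_two, ← ENNReal.rpow_mul]; norm_num
  have half_nonneg : (0 : ℝ) ≤ 1 / 2 := by norm_num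
  calc (∫⁻ x, h x ∂μ) ^ 2
      ≤ (∫⁻ x, f x ^ (1 / 2 : ℝ) * g x ^ (1 / 2 : ℝ) ∂μ) ^ 2 := by
        gcongr with x
        rw [← ENNReal.mul_rpow_of_nonneg _ _ half_nonneg, ← sq_rpow_half (h x)]
        exact ENNReal.rpow_le_rpow (hfg x) half_nonneg
    _ ≤ ((∫⁻ x, f x ∂μ) ^ (1 / 2 : ℝ) * (∫⁻ x, g x ∂μ) ^ (1 / 2 : ℝ)) ^ 2 := by
        gcongr
        exact ENNReal.lintegral_mul_norm_pow_le hf hg half_nonneg half_nonneg (by norm_num)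
    _ = (∫⁻ x, f x ∂μ) * ∫⁻ x, g x ∂μ := by
        rw [mul_pow, rpow_half_sq, rpow_half_sq]

variable {G : Type*} [AddCommGroup G] [MeasurableSpace G] [MeasurableAdd₂ G] [MeasurableNeg G]
  {μ : Measure G} [μ.IsAddLeftInvariant] [μ.IsNegInvariant]

lemma lintegral_mul_sub_left_le_lintegral_sq {v : G → ℝ≥0∞} (hv : Measurable v) (ξ : G) :
    ∫⁻ κ, v κ * v (ξ - κ) ∂μ ≤ ∫⁻ κ, v κ ^ 2 ∂μ := by
  have h := sq_lintegral_le_of_sq_le_mul (μ := μ) (f := fun κ => v κ ^ 2)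
    (g := fun κ => v (ξ - κ) ^ 2) (by fun_prop) (by fun_prop)
    (fun κ => (mul_pow (v κ) (v (ξ - κ)) 2).le)
  rw [lintegral_sub_left_eq_self (fun κ => v κ ^ 2) ξ, ← sq] at h
  exact (ENNReal.pow_le_pow_left_iff two_ne_zero).1 h

lemma lintegral_mul_sq_lintegral_sub_mul_le [SFinite μ] {v a b : G → ℝ≥0∞} (hv : Measurable v)
    (hv_zero : ∀ x, v x ≠ 0) (hv_top : ∀ x, v x ≠ ∞) (ha : Measurable a) (hb : Measurable b) :
    ∫⁻ κ, v κ * (∫⁻ ξ, a (ξ - κ) * b ξ ∂μ) ^ 2 ∂μ ≤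
      (∫⁻ x, v x ^ 2 ∂μ) * (∫⁻ x, (v x)⁻¹ * a x ^ 2 ∂μ) * ∫⁻ x, b x ^ 2 ∂μ := by
  set A := ∫⁻ x, (v x)⁻¹ * a x ^ 2 ∂μ
  have cauchy_schwarz (κ : G) :
      (∫⁻ ξ, a (ξ - κ) * b ξ ∂μ) ^ 2 ≤ A * ∫⁻ ξ, v (ξ - κ) * b ξ ^ 2 ∂μ := by
    have h := sq_lintegral_le_of_sq_le_mul (μ := μ) (h := fun ξ => a (ξ - κ) * b ξ)
      (f := fun ξ => (v (ξ - κ))⁻¹ * a (ξ - κ) ^ 2) (g := fun ξ => v (ξ - κ) * b ξ ^ 2)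
      (by fun_prop) (by fun_prop) fun ξ => le_of_eq <| by
        rw [mul_mul_mul_comm, ENNReal.inv_mul_cancel (hv_zero _) (hv_top _), one_mul, mul_pow]
    rwa [lintegral_sub_right_eq_self (fun ξ => (v ξ)⁻¹ * a ξ ^ 2) κ] at h
  calc ∫⁻ κ, v κ * (∫⁻ ξ, a (ξ - κ) * b ξ ∂μ) ^ 2 ∂μ
      ≤ ∫⁻ κ, v κ * (A * ∫⁻ ξ, v (ξ - κ) * b ξ ^ 2 ∂μ) ∂μ := by
        gcongr with κ
        exact cauchy_schwarz κ
    _ = ∫⁻ κ, A * ∫⁻ ξ, b ξ ^ 2 * (v κ * v (ξ - κ)) ∂μ ∂μ := by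
        congr with κ
        rw [mul_left_comm, ← lintegral_const_mul _ (by fun_prop)]
        congr with ξ
        ring
    _ = A * ∫⁻ κ, ∫⁻ ξ, b ξ ^ 2 * (v κ * v (ξ - κ)) ∂μ ∂μ :=
        lintegral_const_mul _ (Measurable.lintegral_prod_right' (by fun_prop)
          (f := fun z : G × G => b z.2 ^ 2 * (v z.1 * v (z.2 - z.1))))
    _ = A * ∫⁻ ξ, b ξ ^ 2 * ∫⁻ κ, v κ * v (ξ - κ) ∂μ ∂μ := by
        rw [lintegral_lintegral_swap (by fun_prop)]
        congr with ξ
        rw [lintegral_const_mul _ (by fun_prop)]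
    _ ≤ A * ∫⁻ ξ, b ξ ^ 2 * ∫⁻ x, v x ^ 2 ∂μ ∂μ := by
        gcongr A * ∫⁻ ξ, b ξ ^ 2 * ?_ ∂μ with ξ
        exact lintegral_mul_sub_left_le_lintegral_sq hv ξ
    _ = (∫⁻ x, v x ^ 2 ∂μ) * A * ∫⁻ x, b x ^ 2 ∂μ := by
        rw [lintegral_mul_const _ (by fun_prop)]
        ring

end LIntegral

section Haar

lemma inv_one_add_enorm_sq_eq_ofReal {E : Type*} [SeminormedAddGroup E] (x : E) :
    (1 + ‖x‖ₑ ^ 2)⁻¹ = ENNReal.ofReal (1 + ‖x‖ ^ 2)⁻¹ := by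
  rw [ENNReal.ofReal_inv_of_pos (by positivity), ENNReal.ofReal_add zero_le_one (by positivity),
    ENNReal.ofReal_one, ENNReal.ofReal_pow (norm_nonneg x), ofReal_norm]

variable {E : Type*} [NormedAddCommGroup E] [NormedSpace ℝ E] [FiniteDimensional ℝ E]
  [MeasurableSpace E] [BorelSpace E] (μ : Measure E) [μ.IsAddHaarMeasure]

lemma lintegral_comp_smul_eq {f : E → ℝ≥0∞} (hf : Measurable f) {r : ℝ} (hr : r ≠ 0) :
    ∫⁻ x, f (r • x) ∂μ =
      ENNReal.ofReal |(r ^ Module.finrank ℝ E)⁻¹| * ∫⁻ x, f x ∂μ := by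
  rw [← lintegral_map hf (measurable_const_smul r), Measure.map_addHaar_smul μ hr,
    lintegral_smul_measure, smul_eq_mul]

lemma lintegral_sq_inv_one_add_enorm_sq_lt_top (hE : Module.finrank ℝ E < 4) :
    ∫⁻ x : E, ((1 + ‖x‖ₑ ^ 2)⁻¹) ^ 2 ∂μ < ∞ := by
  have hint := integrable_rpow_neg_one_add_norm_sq (μ := μ) (E := E) (r := 4)
    (by exact_mod_cast hE)
  convert hint.lintegral_lt_top using 3 with x
  rw [inv_one_add_enorm_sq_eq_ofReal, ← ENNReal.ofReal_pow (by positivity),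
    show (-4 / 2 : ℝ) = -(2 : ℕ) by norm_num, Real.rpow_neg (by positivity), Real.rpow_natCast,
    inv_pow]

lemma lintegral_inv_one_add_enorm_sq_mul_comp_smul_le {f : E → ℝ≥0∞} (hf : Measurable f) {r : ℝ}
    (hr_zero : r ≠ 0) (hr_le : ‖r‖ ≤ 1) :
    ∫⁻ x, (1 + ‖x‖ₑ ^ 2)⁻¹ * f (r • x) ∂μ ≤
      ENNReal.ofReal |(r ^ Module.finrank ℝ E)⁻¹| * ∫⁻ x, (1 + ‖x‖ₑ ^ 2)⁻¹ * f x ∂μ := by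
  have enorm_smul_le (x : E) : ‖r • x‖ₑ ≤ ‖x‖ₑ := by
    rw [enorm_le_iff_norm_le, norm_smul]
    exact mul_le_of_le_one_left (norm_nonneg x) hr_le
  calc ∫⁻ x, (1 + ‖x‖ₑ ^ 2)⁻¹ * f (r • x) ∂μ
      ≤ ∫⁻ x, (1 + ‖r • x‖ₑ ^ 2)⁻¹ * f (r • x) ∂μ := by
        gcongr with x
        exact enorm_smul_le x
    _ = ENNReal.ofReal |(r ^ Module.finrank ℝ E)⁻¹| * ∫⁻ x, (1 + ‖x‖ₑ ^ 2)⁻¹ * f x ∂μ :=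
        lintegral_comp_smul_eq μ (f := fun x => (1 + ‖x‖ₑ ^ 2)⁻¹ * f x) (by fun_prop) hr_zero

end Haar

section Fourier

open FourierTransform SchwartzMap LineDeriv

variable {E F : Type*} [NormedAddCommGroup E] [InnerProductSpace ℝ E] [FiniteDimensional ℝ E]
  [MeasurableSpace E] [BorelSpace E]

section NormedSpace

variable [NormedAddCommGroup F] [NormedSpace ℂ F]

lemma continuous_fourier_of_integrable {f : E → F} (hf : Integrable f) : Continuous (𝓕 f) :=
  VectorFourier.fourierIntegral_continuous Real.continuous_fourierChar
    (innerSL ℝ).continuous₂ hf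

lemma fourier_compSubConstCLM_neg (φ : 𝓢(E, F)) (κ x : E) :
    𝓕 (φ.compSubConstCLM ℂ (-κ)) x = 𝐞 (inner ℝ κ x) • 𝓕 φ x := by
  have h := VectorFourier.fourierIntegral_comp_add_right 𝐞 volume (innerₗ E) φ κ
  have comp_add : ⇑(φ.compSubConstCLM ℂ (-κ)) = φ ∘ fun v => v + κ := by
    ext v
    simp only [compSubConstCLM_apply, sub_neg_eq_add, Function.comp_apply]
  rw [fourier_coe, fourier_coe, comp_add]
  exact congrFun h x

lemma ae_eq_of_forall_integral_schwartz_smul_eq [CompleteSpace F] {μ : Measure E} {f g : E → F}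
    (hf : LocallyIntegrable f μ) (hg : LocallyIntegrable g μ)
    (h : ∀ φ : 𝓢(E, ℂ), ∫ x, φ x • f x ∂μ = ∫ x, φ x • g x ∂μ) : f =ᵐ[μ] g := by
  refine ae_eq_of_integral_contDiff_smul_eq hf hg fun χ χ_smooth χ_supp => ?_
  have supp : HasCompactSupport (Complex.ofRealCLM ∘ χ) := χ_supp.comp_left rfl
  have smooth : ContDiff ℝ (⊤ : ℕ∞) (Complex.ofRealCLM ∘ χ) := by fun_prop
  simpa using h (supp.toSchwartzMap smooth)

end NormedSpace

variable [NormedAddCommGroup F] [InnerProductSpace ℂ F] [CompleteSpace F]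

lemma integral_schwartz_smul_fourier (f : E →₂[volume] F) (φ : 𝓢(E, ℂ)) :
    ∫ ξ, φ ξ • (𝓕 f : E →₂[volume] F) ξ = ∫ x, 𝓕 φ x • f x := by
  have h := DFunLike.congr_fun (Lp.fourier_toTemperedDistribution_eq f) φ
  simpa only [TemperedDistribution.fourier_apply, Lp.toTemperedDistribution_apply] using h.symm

lemma lintegral_enorm_fourier_sq (f : E →₂[volume] F) :
    ∫⁻ ξ, ‖(𝓕 f : E →₂[volume] F) ξ‖ₑ ^ 2 = ∫⁻ x, ‖f x‖ₑ ^ 2 := by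
  have eLpNorm_sq (h : E →₂[volume] F) : eLpNorm h 2 volume ^ 2 = ∫⁻ x, ‖h x‖ₑ ^ 2 := by
    simpa using eLpNorm_nnreal_pow_eq_lintegral (f := h) (μ := volume) (p := 2) two_ne_zero
  rw [← eLpNorm_sq, ← eLpNorm_sq, ← Lp.enorm_def, ← Lp.enorm_def,
    enorm_eq_iff_norm_eq.2 (Lp.norm_fourier_eq f)]

lemma fourier_ae_eq_comp_sub {f g : E →₂[volume] F} {κ : E}
    (hg : g =ᵐ[volume] fun x => 𝐞 (inner ℝ κ x) • f x) :
    (𝓕 g : E →₂[volume] F) =ᵐ[volume] fun ξ => (𝓕 f : E →₂[volume] F) (ξ - κ) := by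
  have translate_memLp : MemLp (fun ξ => (𝓕 f : E →₂[volume] F) (ξ - κ)) 2 volume :=
    (Lp.memLp _).comp_measurePreserving (measurePreserving_sub_right volume κ)
  refine ae_eq_of_forall_integral_schwartz_smul_eq
    ((Lp.memLp _).locallyIntegrable one_le_two) (translate_memLp.locallyIntegrable one_le_two)
    fun φ => ?_
  calc ∫ ξ, φ ξ • (𝓕 g : E →₂[volume] F) ξ
      = ∫ x, 𝓕 φ x • g x := integral_schwartz_smul_fourier g φ
    _ = ∫ x, 𝓕 (φ.compSubConstCLM ℂ (-κ)) x • f x := by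
        refine integral_congr_ae (hg.mono fun x hx => ?_)
        simp only [hx, fourier_compSubConstCLM_neg, Circle.smul_def, smul_smul, smul_eq_mul,
          mul_comm]
    _ = ∫ ξ, φ.compSubConstCLM ℂ (-κ) ξ • (𝓕 f : E →₂[volume] F) ξ :=
        (integral_schwartz_smul_fourier f _).symm
    _ = ∫ ξ, φ ξ • (𝓕 f : E →₂[volume] F) (ξ - κ) := by
        rw [← integral_sub_right_eq_self _ κ]
        simp only [compSubConstCLM_apply, sub_neg_eq_add, sub_add_cancel]

lemma fourier_inner_eq_integral (f g : E →₂[volume] F) (κ : E) :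
    𝓕 (fun x => inner ℂ (f x) (g x)) κ =
      ∫ ξ, inner ℂ ((𝓕 f : E →₂[volume] F) (ξ - κ)) ((𝓕 g : E →₂[volume] F) ξ) := by
  have modulated_memLp : MemLp (fun x => 𝐞 (inner ℝ κ x) • f x) 2 volume := by
    refine (Lp.memLp f).of_le ?_ (.of_forall fun x => (Circle.norm_smul _ _).le)
    exact (Real.continuous_fourierChar.comp (by fun_prop)).aestronglyMeasurable.smul
      (Lp.aestronglyMeasurable f)
  set fκ := modulated_memLp.toLp _
  have hfκ : fκ =ᵐ[volume] fun x => 𝐞 (inner ℝ κ x) • f x := modulated_memLp.coeFn_toLp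
  calc 𝓕 (fun x => inner ℂ (f x) (g x)) κ
      = inner ℂ fκ g := by
        rw [Real.fourier_eq, L2.inner_def]
        refine integral_congr_ae (hfκ.mono fun x hx => ?_)
        simp only [hx, Circle.smul_def, inner_smul_left, smul_eq_mul, real_inner_comm κ x,
          AddChar.map_neg_eq_inv, Circle.coe_inv_eq_conj]
    _ = inner ℂ (𝓕 fκ : E →₂[volume] F) (𝓕 g) := (Lp.inner_fourier_eq fκ g).symm
    _ = ∫ ξ, inner ℂ ((𝓕 f : E →₂[volume] F) (ξ - κ)) ((𝓕 g : E →₂[volume] F) ξ) := by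
        rw [L2.inner_def]
        exact integral_congr_ae ((fourier_ae_eq_comp_sub hfκ).mono fun ξ hξ => by simp only [hξ])

lemma lintegral_mul_enorm_fourier_inner_sq_le {v : E → ℝ≥0∞} (hv : Measurable v)
    (hv_zero : ∀ x, v x ≠ 0) (hv_top : ∀ x, v x ≠ ∞) (f g : E →₂[volume] F) :
    ∫⁻ κ, v κ * ‖𝓕 (fun x => inner ℂ (f x) (g x)) κ‖ₑ ^ 2 ≤
      (∫⁻ x, v x ^ 2) * (∫⁻ ξ, (v ξ)⁻¹ * ‖(𝓕 f : E →₂[volume] F) ξ‖ₑ ^ 2) *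
        ∫⁻ x, ‖g x‖ₑ ^ 2 := by
  have enorm_measurable (h : E →₂[volume] F) : Measurable fun x => ‖h x‖ₑ :=
    (Lp.stronglyMeasurable h).enorm
  rw [← lintegral_enorm_fourier_sq g]
  refine le_trans ?_ (lintegral_mul_sq_lintegral_sub_mul_le hv hv_zero hv_top
    (enorm_measurable (𝓕 f)) (enorm_measurable (𝓕 g)))
  gcongr ∫⁻ κ, v κ * ?_ ^ 2 with κ
  rw [fourier_inner_eq_integral]
  refine (enorm_integral_le_lintegral_enorm _).trans ?_
  gcongr with ξ
  simpa only [← ofReal_norm, ← ENNReal.ofReal_mul (norm_nonneg _)]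
    using ENNReal.ofReal_le_ofReal (norm_inner_le_norm _ _)

lemma lineDerivOp_toTemperedDistribution_eq {u : E → F} (hu : Differentiable ℝ u) {m : E}
    {f g : E →₂[volume] F} (hf : f =ᵐ[volume] u)
    (hg : g =ᵐ[volume] fun x => fderiv ℝ u x m) :
    ∂_{m} (f : 𝓢'(E, F)) = (g : 𝓢'(E, F)) := by
  have smul_integrable (φ : 𝓢(E, ℂ)) {w : E → F} {h : E →₂[volume] F} (hw : h =ᵐ[volume] w) :
      Integrable fun x => φ x • w x :=
    memLp_one_iff_integrable.1 (((memLp_congr_ae hw).1 (Lp.memLp h)).smul (φ.memLp 2))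
  ext φ
  calc (∂_{m} (f : 𝓢'(E, F))) φ
      = -∫ x, ∂_{m} φ x • f x := by
        simp only [TemperedDistribution.lineDerivOp_apply_apply, map_neg,
          Lp.toTemperedDistribution_apply]
    _ = -∫ x, fderiv ℝ φ x m • u x := by
        congr 1
        exact integral_congr_ae (hf.mono fun x hx => by
          simp only [hx, lineDerivOp_apply_eq_fderiv])
    _ = ∫ x, φ x • fderiv ℝ u x m := by
        rw [integral_smul_fderiv_eq_neg_fderiv_smul_of_integrable
          (by simpa only [lineDerivOp_apply_eq_fderiv] using smul_integrable (∂_{m} φ) hf)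
          (smul_integrable φ hg) (smul_integrable φ hf) (fun x _ => φ.differentiableAt)
          (fun x _ => hu x)]
    _ = (g : 𝓢'(E, F)) φ := by
        rw [Lp.toTemperedDistribution_apply]
        exact integral_congr_ae (hg.mono fun x hx => by simp only [hx])

lemma fourier_ae_eq_of_lineDerivOp_eq {m : E} {f g : E →₂[volume] F}
    (hfg : ∂_{m} (f : 𝓢'(E, F)) = (g : 𝓢'(E, F))) :
    (𝓕 g : E →₂[volume] F) =ᵐ[volume] fun ξ =>
      (2 * Real.pi * Complex.I * (inner ℝ ξ m : ℝ) : ℂ) • (𝓕 f : E →₂[volume] F) ξ := by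
  have symbol_growth : (fun ξ : E => ((inner ℝ ξ m : ℝ) : ℂ)).HasTemperateGrowth := by fun_prop
  have locallyIntegrable (h : E →₂[volume] F) : LocallyIntegrable h :=
    (Lp.memLp h).locallyIntegrable one_le_two
  refine ae_eq_of_forall_integral_schwartz_smul_eq (locallyIntegrable _) ?_ fun φ => ?_
  · have h := locallyIntegrable (𝓕 f)
    rw [← locallyIntegrableOn_univ] at h ⊢
    exact h.continuousOn_smul isOpen_univ.isLocallyClosed (by fun_prop)
  · have h := DFunLike.congr_fun (congrArg 𝓕 hfg) φ
    simp only [TemperedDistribution.fourier_lineDerivOp_eq, Lp.fourier_toTemperedDistribution_eq,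
      Lp.toTemperedDistribution_apply, smul_apply,
      TemperedDistribution.smulLeftCLM_apply_apply] at h
    rw [← h, ← integral_smul]
    congr with ξ
    rw [SchwartzMap.smulLeftCLM_apply_apply symbol_growth]
    simp only [smul_smul, smul_eq_mul]
    ring_nf

lemma lintegral_one_add_enorm_sq_mul_enorm_fourier_sq_le {ι : Type*} [Fintype ι]
    (b : OrthonormalBasis ι ℝ E) {f : E →₂[volume] F} {g : ι → E →₂[volume] F}
    (hfg : ∀ i, ∂_{b i} (f : 𝓢'(E, F)) = (g i : 𝓢'(E, F))) :
    ∫⁻ ξ, (1 + ‖ξ‖ₑ ^ 2) * ‖(𝓕 f : E →₂[volume] F) ξ‖ₑ ^ 2 ≤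
      (∫⁻ x, ‖f x‖ₑ ^ 2) + ∑ i, ∫⁻ x, ‖g i x‖ₑ ^ 2 := by
  have enorm_sq_measurable (h : E →₂[volume] F) : Measurable fun x => ‖h x‖ₑ ^ 2 :=
    (Lp.stronglyMeasurable h).enorm.pow_const 2
  have enorm_sq_eq_sum (ξ : E) : ‖ξ‖ₑ ^ 2 = ∑ i, ‖(inner ℝ ξ (b i) : ℝ)‖ₑ ^ 2 := by
    simp only [← ofReal_norm, ← ENNReal.ofReal_pow (norm_nonneg _)]
    rw [← ENNReal.ofReal_sum_of_nonneg fun i _ => by positivity, b.sum_sq_norm_inner_left]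
  have enorm_le_symbol (t : ℝ) : ‖t‖ₑ ≤ ‖(2 * Real.pi * Complex.I * t : ℂ)‖ₑ := by
    rw [enorm_le_iff_norm_le]
    simp only [norm_mul, Complex.norm_I, Complex.norm_real, Complex.norm_ofNat, mul_one,
      Real.norm_of_nonneg Real.pi_pos.le]
    exact le_mul_of_one_le_left (norm_nonneg t) (by linarith [Real.pi_gt_three])
  simp only [← lintegral_enorm_fourier_sq f, ← fun i => lintegral_enorm_fourier_sq (g i)]
  rw [← lintegral_finsetSum _ fun i _ => enorm_sq_measurable (𝓕 (g i)),
    ← lintegral_add_left (enorm_sq_measurable (𝓕 f))]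
  refine lintegral_mono_ae ((ae_all_iff.2 fun i =>
    fourier_ae_eq_of_lineDerivOp_eq (hfg i)).mono fun ξ hξ => ?_)
  simp only [hξ, enorm_smul, mul_pow, add_mul, one_mul, enorm_sq_eq_sum, Finset.sum_mul]
  gcongr with i
  exact enorm_le_symbol _

/-- An `H¹` function times an `L²` function lies in `H⁻¹` as long as `(1 + |ξ|²)⁻¹` is square
integrable, that is, below dimension four. -/
lemma lintegral_inv_one_add_enorm_sq_mul_enorm_fourier_inner_sq_le {ι : Type*} [Fintype ι]
    (b : OrthonormalBasis ι ℝ E) {u w : E → F} (hu : Differentiable ℝ u)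
    (hu_memLp : MemLp u 2 volume) (hu' : ∀ i, MemLp (fun x => fderiv ℝ u x (b i)) 2 volume)
    (hw : MemLp w 2 volume) :
    ∫⁻ κ, (1 + ‖κ‖ₑ ^ 2)⁻¹ * ‖𝓕 (fun x => inner ℂ (u x) (w x)) κ‖ₑ ^ 2 ≤
      (∫⁻ x : E, ((1 + ‖x‖ₑ ^ 2)⁻¹) ^ 2) *
        ((∫⁻ x, ‖u x‖ₑ ^ 2) + ∑ i, ∫⁻ x, ‖fderiv ℝ u x (b i)‖ₑ ^ 2) * ∫⁻ x, ‖w x‖ₑ ^ 2 := by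
  have lintegral_toLp {h : E → F} (hh : MemLp h 2 volume) :
      ∫⁻ x, ‖hh.toLp h x‖ₑ ^ 2 = ∫⁻ x, ‖h x‖ₑ ^ 2 :=
    lintegral_congr_ae (hh.coeFn_toLp.mono fun x hx => by simp only [hx])
  have fourier_toLp : 𝓕 (fun x => inner ℂ (u x) (w x)) =
      𝓕 (fun x => inner ℂ (hu_memLp.toLp u x) (hw.toLp w x)) := by
    refine funext (Real.fourier_congr_ae ?_)
    filter_upwards [hu_memLp.coeFn_toLp, hw.coeFn_toLp] with x hux hwx
    rw [hux, hwx]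
  have derivative_bound := lintegral_one_add_enorm_sq_mul_enorm_fourier_sq_le b fun i =>
    lineDerivOp_toTemperedDistribution_eq hu hu_memLp.coeFn_toLp (hu' i).coeFn_toLp
  have product_bound := lintegral_mul_enorm_fourier_inner_sq_le
    (v := fun ξ : E => (1 + ‖ξ‖ₑ ^ 2)⁻¹) (by fun_prop) (by simp) (by simp)
    (hu_memLp.toLp u) (hw.toLp w)
  simp only [inv_inv, lintegral_toLp] at derivative_bound product_bound
  rw [fourier_toLp]
  exact product_bound.trans (by gcongr)

end Fourier
section SourceTerm

open FourierTransform

local notation "ℝ³" => EuclideanSpace ℝ (Fin 3)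

variable {u : ℝ³ → ℂ}

/-- The `j`-th component `ū ∂ⱼu` of the momentum density, without the factor `-i` of the momentum
operator; `f_u(k)` is a combination of the Fourier transforms of these components. -/
def momentumDensity (u : ℝ³ → ℂ) (j : Fin 3) (x : ℝ³) : ℂ := inner ℂ (u x) (pd u j x)

lemma fderiv_basisFun_eq_pd (u : ℝ³ → ℂ) (j : Fin 3) (x : ℝ³) :
    fderiv ℝ u x (EuclideanSpace.basisFun (Fin 3) ℝ j) = pd u j x := by
  rw [EuclideanSpace.basisFun_apply, pd]

lemma norm_pd_le (u : ℝ³ → ℂ) (j : Fin 3) (x : ℝ³) : ‖pd u j x‖ ≤ ‖fderiv ℝ u x‖ := by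
  simpa [pd] using (fderiv ℝ u x).le_opNorm (EuclideanSpace.single j 1)

lemma memLp_pd (hu' : MemLp (fderiv ℝ u) 2 volume) (j : Fin 3) : MemLp (pd u j) 2 volume :=
  hu'.mono (hu'.1.apply_continuousLinearMap _) (.of_forall (norm_pd_le u j))

lemma integrable_momentumDensity (hu : MemLp u 2 volume) (hu' : MemLp (fderiv ℝ u) 2 volume)
    (j : Fin 3) : Integrable (momentumDensity u j) :=
  (memLp_pd hu' j).integrable_mul hu.star

lemma fu_eq_sum_fourier (u : ℝ³ → ℂ) (k : ℝ³) :
    fu u k = (2 * B0 k : ℝ) * -Complex.I *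
      ∑ j, (k j : ℂ) * 𝓕 (momentumDensity u j) ((2 * Real.pi)⁻¹ • k) := by
  have two_pi_mul (x : ℝ³) : 2 * Real.pi * inner ℝ x ((2 * Real.pi)⁻¹ • k) = inner ℝ k x := by
    rw [real_inner_smul_right, mul_inv_cancel_left₀ Real.two_pi_pos.ne', real_inner_comm]
  have integral_eq (j : Fin 3) :
      ∫ x, Complex.exp (-(Complex.I * (inner ℝ k x : ℝ))) * (starRingEnd ℂ) (u x) *
        (-Complex.I * pd u j x) =
      -Complex.I * 𝓕 (momentumDensity u j) ((2 * Real.pi)⁻¹ • k) := by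
    rw [Real.fourier_eq, ← integral_const_mul]
    refine integral_congr_ae (.of_forall fun x => ?_)
    simp only [Circle.smul_def, Real.fourierChar_apply, mul_neg, two_pi_mul, momentumDensity,
      RCLike.inner_apply, smul_eq_mul, Complex.ofReal_neg, neg_mul, mul_comm _ Complex.I]
    ring
  simp only [fu, integral_eq, Finset.mul_sum]
  exact Finset.sum_congr rfl fun j _ => by ring

lemma one_le_ω (k : ℝ³) : 1 ≤ ω k :=
  Real.one_le_sqrt.2 (le_add_of_nonneg_right (sq_nonneg _))

lemma ω_mul_B0_sq_mul_norm_sq_le (k : ℝ³) : ω k * B0 k ^ 2 * ‖k‖ ^ 2 ≤ (1 + ‖k‖ ^ 2)⁻¹ := by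
  have ω_pos : 0 < ω k := one_pos.trans_le (one_le_ω k)
  calc ω k * B0 k ^ 2 * ‖k‖ ^ 2
      = ‖k‖ ^ 2 / (‖k‖ ^ 2 + ω k) ^ 2 := by
        rw [B0, div_pow, mul_pow, Real.sq_sqrt ω_pos.le]
        field_simp
    _ ≤ (1 + ‖k‖ ^ 2) / (‖k‖ ^ 2 + 1) ^ 2 := by
        gcongr
        · linarith
        · exact one_le_ω k
    _ = (1 + ‖k‖ ^ 2)⁻¹ := by
        rw [add_comm (‖k‖ ^ 2)]
        field_simp

lemma ω_mul_norm_fu_sq_le (u : ℝ³ → ℂ) (k : ℝ³) :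
    ω k * ‖fu u k‖ ^ 2 ≤
      4 * ∑ j, (1 + ‖k‖ ^ 2)⁻¹ * ‖𝓕 (momentumDensity u j) ((2 * Real.pi)⁻¹ • k)‖ ^ 2 := by
  set V : Fin 3 → ℂ := fun j => 𝓕 (momentumDensity u j) ((2 * Real.pi)⁻¹ • k)
  have cauchy_schwarz : ‖∑ j, (k j : ℂ) * V j‖ ^ 2 ≤ ‖k‖ ^ 2 * ∑ j, ‖V j‖ ^ 2 :=
    calc ‖∑ j, (k j : ℂ) * V j‖ ^ 2
        ≤ (∑ j, ‖k j‖ * ‖V j‖) ^ 2 := by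
          gcongr
          refine (norm_sum_le _ _).trans_eq ?_
          simp only [norm_mul, Complex.norm_real]
      _ ≤ (∑ j, ‖k j‖ ^ 2) * ∑ j, ‖V j‖ ^ 2 := Finset.sum_mul_sq_le_sq_mul_sq _ _ _
      _ = ‖k‖ ^ 2 * ∑ j, ‖V j‖ ^ 2 := by rw [EuclideanSpace.norm_sq_eq]
  have ω_nonneg : 0 ≤ ω k := zero_le_one.trans (one_le_ω k)
  calc ω k * ‖fu u k‖ ^ 2
      = 4 * (ω k * B0 k ^ 2) * ‖∑ j, (k j : ℂ) * V j‖ ^ 2 := by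
        rw [fu_eq_sum_fourier, norm_mul, norm_mul, norm_neg, Complex.norm_I, Complex.norm_real,
          mul_one, mul_pow, Real.norm_eq_abs, sq_abs]
        ring
    _ ≤ 4 * (ω k * B0 k ^ 2) * (‖k‖ ^ 2 * ∑ j, ‖V j‖ ^ 2) := by gcongr
    _ = 4 * (ω k * B0 k ^ 2 * ‖k‖ ^ 2 * ∑ j, ‖V j‖ ^ 2) := by ring
    _ ≤ 4 * ((1 + ‖k‖ ^ 2)⁻¹ * ∑ j, ‖V j‖ ^ 2) := by
        gcongr
        exact ω_mul_B0_sq_mul_norm_sq_le k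
    _ = 4 * ∑ j, (1 + ‖k‖ ^ 2)⁻¹ * ‖V j‖ ^ 2 := by rw [Finset.mul_sum]

lemma ofReal_ω_mul_norm_fu_sq_le (u : ℝ³ → ℂ) (k : ℝ³) :
    ENNReal.ofReal (ω k * ‖fu u k‖ ^ 2) ≤
      4 * ∑ j, (1 + ‖k‖ₑ ^ 2)⁻¹ * ‖𝓕 (momentumDensity u j) ((2 * Real.pi)⁻¹ • k)‖ₑ ^ 2 := by
  refine (ENNReal.ofReal_le_ofReal (ω_mul_norm_fu_sq_le u k)).trans_eq ?_
  rw [ENNReal.ofReal_mul four_pos.le, ENNReal.ofReal_ofNat,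
    ENNReal.ofReal_sum_of_nonneg fun j _ => by positivity]
  congr with j
  rw [ENNReal.ofReal_mul (by positivity), inv_one_add_enorm_sq_eq_ofReal,
    ENNReal.ofReal_pow (norm_nonneg _), ofReal_norm]

lemma H1sq_nonneg (u : ℝ³ → ℂ) : 0 ≤ H1sq u := by
  unfold H1sq
  positivity

lemma norm_fourier_momentumDensity_le (hu : MemLp u 2 volume) (hu' : MemLp (fderiv ℝ u) 2 volume)
    (j : Fin 3) (κ : ℝ³) : ‖𝓕 (momentumDensity u j) κ‖ ≤ H1sq u / 2 := by
  have hu_sq := (memLp_two_iff_integrable_sq_norm hu.1).1 hu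
  have hu'_sq := (memLp_two_iff_integrable_sq_norm hu'.1).1 hu'
  calc ‖𝓕 (momentumDensity u j) κ‖
      ≤ ∫ x, ‖momentumDensity u j x‖ :=
        VectorFourier.norm_fourierIntegral_le_integral_norm _ _ _ _ _
    _ ≤ ∫ x, (‖u x‖ ^ 2 + ‖fderiv ℝ u x‖ ^ 2) / 2 := by
        refine integral_mono (integrable_momentumDensity hu hu' j).norm
          ((hu_sq.add hu'_sq).div_const 2) fun x => ?_
        have h := (norm_inner_le_norm (𝕜 := ℂ) (u x) (pd u j x)).trans
          (mul_le_mul_of_nonneg_left (norm_pd_le u j x) (norm_nonneg _))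
        have := two_mul_le_add_sq ‖u x‖ ‖fderiv ℝ u x‖
        simp only [momentumDensity]
        linarith
    _ = H1sq u / 2 := by rw [integral_div, integral_add hu_sq hu'_sq, H1sq]

lemma norm_fu_le (hu : MemLp u 2 volume) (hu' : MemLp (fderiv ℝ u) 2 volume) (k : ℝ³) :
    ‖fu u k‖ ≤ 2 * H1sq u := by
  refine le_of_sq_le_sq ?_ (mul_nonneg two_pos.le (H1sq_nonneg u))
  have weight_le_one : (1 + ‖k‖ ^ 2)⁻¹ ≤ 1 :=
    inv_le_one_of_one_le₀ (le_add_of_nonneg_right (sq_nonneg _))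
  calc ‖fu u k‖ ^ 2
      ≤ ω k * ‖fu u k‖ ^ 2 := le_mul_of_one_le_left (sq_nonneg _) (one_le_ω k)
    _ ≤ 4 * ∑ j, (1 + ‖k‖ ^ 2)⁻¹ * ‖𝓕 (momentumDensity u j) ((2 * Real.pi)⁻¹ • k)‖ ^ 2 :=
        ω_mul_norm_fu_sq_le u k
    _ ≤ 4 * ∑ j : Fin 3, 1 * (H1sq u / 2) ^ 2 := by
        gcongr with j
        exact norm_fourier_momentumDensity_le hu hu' j _
    _ = 3 * H1sq u ^ 2 := by
        simp only [Finset.sum_const, Finset.card_univ, Fintype.card_fin, nsmul_eq_mul]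
        push_cast
        ring
    _ ≤ (2 * H1sq u) ^ 2 := by nlinarith [sq_nonneg (H1sq u)]

lemma lintegral_enorm_sq_le_H1sq (hu : MemLp u 2 volume) :
    ∫⁻ x, ‖u x‖ₑ ^ 2 ≤ ENNReal.ofReal (H1sq u) := by
  rw [lintegral_enorm_sq_eq_ofReal_integral hu]
  exact ENNReal.ofReal_le_ofReal (le_add_of_nonneg_right (by positivity))

lemma lintegral_enorm_pd_sq_le_H1sq (hu' : MemLp (fderiv ℝ u) 2 volume) (j : Fin 3) :
    ∫⁻ x, ‖pd u j x‖ₑ ^ 2 ≤ ENNReal.ofReal (H1sq u) :=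
  calc ∫⁻ x, ‖pd u j x‖ₑ ^ 2
      ≤ ∫⁻ x, ‖fderiv ℝ u x‖ₑ ^ 2 := by
        gcongr with x
        exact enorm_le_iff_norm_le.2 (norm_pd_le u j x)
    _ = ENNReal.ofReal (∫ x, ‖fderiv ℝ u x‖ ^ 2) := lintegral_enorm_sq_eq_ofReal_integral hu'
    _ ≤ ENNReal.ofReal (H1sq u) :=
        ENNReal.ofReal_le_ofReal (le_add_of_nonneg_left (by positivity))

lemma lintegral_enorm_fourier_momentumDensity_sq_le (hu : Differentiable ℝ u)
    (hu_memLp : MemLp u 2 volume) (hu' : MemLp (fderiv ℝ u) 2 volume) (j : Fin 3) :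
    ∫⁻ κ, (1 + ‖κ‖ₑ ^ 2)⁻¹ * ‖𝓕 (momentumDensity u j) κ‖ₑ ^ 2 ≤
      4 * (∫⁻ x : ℝ³, ((1 + ‖x‖ₑ ^ 2)⁻¹) ^ 2) * ENNReal.ofReal (H1sq u) ^ 2 := by
  set H := ENNReal.ofReal (H1sq u)
  calc ∫⁻ κ, (1 + ‖κ‖ₑ ^ 2)⁻¹ * ‖𝓕 (momentumDensity u j) κ‖ₑ ^ 2
      ≤ (∫⁻ x : ℝ³, ((1 + ‖x‖ₑ ^ 2)⁻¹) ^ 2) *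
          ((∫⁻ x, ‖u x‖ₑ ^ 2) + ∑ i, ∫⁻ x, ‖pd u i x‖ₑ ^ 2) * ∫⁻ x, ‖pd u j x‖ₑ ^ 2 := by
        have h := lintegral_inv_one_add_enorm_sq_mul_enorm_fourier_inner_sq_le
          (EuclideanSpace.basisFun (Fin 3) ℝ) hu hu_memLp
          (by simpa only [fderiv_basisFun_eq_pd] using memLp_pd hu') (memLp_pd hu' j)
        simp only [fderiv_basisFun_eq_pd] at h
        exact h
    _ ≤ (∫⁻ x : ℝ³, ((1 + ‖x‖ₑ ^ 2)⁻¹) ^ 2) * (H + ∑ _i : Fin 3, H) * H := by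
        gcongr with i
        · exact lintegral_enorm_sq_le_H1sq hu_memLp
        · exact lintegral_enorm_pd_sq_le_H1sq hu' i
        · exact lintegral_enorm_pd_sq_le_H1sq hu' j
    _ = 4 * (∫⁻ x : ℝ³, ((1 + ‖x‖ₑ ^ 2)⁻¹) ^ 2) * H ^ 2 := by
        simp only [Finset.sum_const, Finset.card_univ, Fintype.card_fin, nsmul_eq_mul]
        push_cast
        ring

lemma lintegral_ω_mul_norm_fu_sq_le (hu : Differentiable ℝ u) (hu_memLp : MemLp u 2 volume)
    (hu' : MemLp (fderiv ℝ u) 2 volume) :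
    ∫⁻ k, ENNReal.ofReal (ω k * ‖fu u k‖ ^ 2) ≤
      48 * ENNReal.ofReal ((2 * Real.pi) ^ 3) * (∫⁻ x : ℝ³, ((1 + ‖x‖ₑ ^ 2)⁻¹) ^ 2) *
        ENNReal.ofReal (H1sq u) ^ 2 := by
  set r := (2 * Real.pi)⁻¹
  have r_pos : 0 < r := inv_pos.2 Real.two_pi_pos
  have r_le_one : ‖r‖ ≤ 1 := by
    rw [Real.norm_of_nonneg r_pos.le]
    exact inv_le_one_of_one_le₀ (by linarith [Real.pi_gt_three])
  set K := ∫⁻ x : ℝ³, ((1 + ‖x‖ₑ ^ 2)⁻¹) ^ 2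
  have fourier_measurable (j : Fin 3) : Measurable (𝓕 (momentumDensity u j)) :=
    (continuous_fourier_of_integrable (integrable_momentumDensity hu_memLp hu' j)).measurable
  calc ∫⁻ k, ENNReal.ofReal (ω k * ‖fu u k‖ ^ 2)
      ≤ ∫⁻ k, 4 * ∑ j, (1 + ‖k‖ₑ ^ 2)⁻¹ * ‖𝓕 (momentumDensity u j) (r • k)‖ₑ ^ 2 := by
        gcongr with k
        exact ofReal_ω_mul_norm_fu_sq_le u k
    _ = 4 * ∑ j, ∫⁻ k, (1 + ‖k‖ₑ ^ 2)⁻¹ * ‖𝓕 (momentumDensity u j) (r • k)‖ₑ ^ 2 := by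
        rw [lintegral_const_mul _ (by fun_prop), lintegral_finsetSum _ (by fun_prop)]
    _ ≤ 4 * ∑ _j : Fin 3, ENNReal.ofReal ((2 * Real.pi) ^ 3) *
          (4 * K * ENNReal.ofReal (H1sq u) ^ 2) := by
        have dilation (j : Fin 3) := lintegral_inv_one_add_enorm_sq_mul_comp_smul_le volume
          ((fourier_measurable j).enorm.pow_const 2) r_pos.ne' r_le_one
        have jacobian : |(r ^ 3)⁻¹| = (2 * Real.pi) ^ 3 := by
          rw [abs_of_pos (inv_pos.2 (pow_pos r_pos 3)), inv_pow, inv_inv]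
        simp only [finrank_euclideanSpace_fin, jacobian] at dilation
        gcongr with j
        exact (dilation j).trans (by
          gcongr
          exact lintegral_enorm_fourier_momentumDensity_sq_le hu hu_memLp hu' j)
    _ = 48 * ENNReal.ofReal ((2 * Real.pi) ^ 3) * K * ENNReal.ofReal (H1sq u) ^ 2 := by
        simp only [Finset.sum_const, Finset.card_univ, Fintype.card_fin, nsmul_eq_mul]
        push_cast
        ring

end SourceTerm

theorem fu_bounds_general :
    ∃ C > 0, ∀ u : EuclideanSpace ℝ (Fin 3) → ℂ,
      Differentiable ℝ u → MemLp u 2 volume →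
      MemLp (fun x => fderiv ℝ u x) 2 volume →
      (∀ k, ‖fu u k‖ ≤ C * H1norm u ^ 2) ∧
      ∫⁻ k, ENNReal.ofReal (ω k * ‖fu u k‖ ^ 2) ≤
        ENNReal.ofReal (C * H1norm u ^ 4) := by
  set K := ∫⁻ x : EuclideanSpace ℝ (Fin 3), ((1 + ‖x‖ₑ ^ 2)⁻¹) ^ 2
  have K_lt_top : K < ∞ := lintegral_sq_inv_one_add_enorm_sq_lt_top volume (by simp)
  set A := 48 * (2 * Real.pi) ^ 3 * K.toReal
  have A_nonneg : 0 ≤ A := by positivity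
  refine ⟨A + 2, by positivity, fun u hu hu_memLp hu' => ⟨fun k => ?_, ?_⟩⟩
  · rw [H1norm, Real.sq_sqrt (H1sq_nonneg u)]
    refine (norm_fu_le hu_memLp hu' k).trans ?_
    exact mul_le_mul_of_nonneg_right (le_add_of_nonneg_left A_nonneg) (H1sq_nonneg u)
  · calc ∫⁻ k, ENNReal.ofReal (ω k * ‖fu u k‖ ^ 2)
        ≤ 48 * ENNReal.ofReal ((2 * Real.pi) ^ 3) * K * ENNReal.ofReal (H1sq u) ^ 2 :=
          lintegral_ω_mul_norm_fu_sq_le hu hu_memLp hu'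
      _ = ENNReal.ofReal (A * H1norm u ^ 4) := by
          rw [H1norm, pow_mul _ 2 2, Real.sq_sqrt (H1sq_nonneg u),
            ENNReal.ofReal_mul A_nonneg, ENNReal.ofReal_mul (by positivity),
            ENNReal.ofReal_mul (by norm_num), ENNReal.ofReal_toReal K_lt_top.ne,
            ENNReal.ofReal_pow (H1sq_nonneg u), ENNReal.ofReal_ofNat]
      _ ≤ ENNReal.ofReal ((A + 2) * H1norm u ^ 4) := by
          gcongr
          linarith

/-- There is `C > 0` such that for every differentiable `u` with `∇u ∈ L²`, `‖u‖_{L²} = 1`: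
`sup_k |f_u(k)| ≤ C‖u‖_{H¹}²` and `∫ ω(k)|f_u(k)|² dk ≤ C‖u‖_{H¹}⁴`. -/
theorem fu_bounds :
    ∃ C > 0, ∀ u : EuclideanSpace ℝ (Fin 3) → ℂ,
      Differentiable ℝ u → MemLp u 2 volume →
      MemLp (fun x => fderiv ℝ u x) 2 volume →
      (∫ x, ‖u x‖ ^ 2) = 1 →
      (∀ k, ‖fu u k‖ ≤ C * H1norm u ^ 2) ∧
      ∫⁻ k, ENNReal.ofReal (ω k * ‖fu u k‖ ^ 2) ≤
        ENNReal.ofReal (C * H1norm u ^ 4) := by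
  obtain ⟨C, hC, h⟩ := fu_bounds_general
  exact ⟨C, hC, fun u hu hu_memLp hu' _ => h u hu hu_memLp hu'⟩

end
end

section
/- There exists C > 0 such that for every p ∈ ℝ³: ∫_{ℝ³} (ω(k)·(|k|²+ω(k)))^{−1} · (1+|p−k|²)^{−1/2} dk ≤ C; i.e., sup_{p∈ℝ³} ∫ G₀(k)B₀(k)(1+|p−k|²)^{−1/2} dk < ∞ where G₀(k) = ω(k)^{−1/2}. -/
open MeasureTheory
open scoped ENNReal

noncomputable section

/-!
Since `|k|² + ω(k) ≥ 1 + |k|²`, the integrand is at most `(1+|k|²)^{-3/2} (1+|p-k|²)^{-1/2}`. Both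
factors are powers of `f(k) = (1+|k|²)^{-2}`, at `k` and at `p - k`, with exponents `3/4` and `1/4`.
As these add up to `1`, Hölder's inequality and translation invariance bound the integral by `∫ f`
for every `p`, and `∫ f` is finite because the dimension is less than `4`.
-/

theorem lintegral_rpow_mul_rpow_sub_left_le {G : Type*} [AddGroup G] [MeasurableSpace G]
    [MeasurableAdd G] [MeasurableNeg G] {μ : Measure G} [μ.IsNegInvariant] [μ.IsAddLeftInvariant]
    {f : G → ℝ≥0∞} (hf : AEMeasurable f μ) {a b : ℝ} (ha : 0 ≤ a) (hb : 0 ≤ b) (hab : a + b = 1)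
    (p : G) :
    ∫⁻ k, f k ^ a * f (p - k) ^ b ∂μ ≤ ∫⁻ k, f k ∂μ := by
  have hf_sub : AEMeasurable (fun k ↦ f (p - k)) μ :=
    hf.comp_quasiMeasurePreserving (μ.measurePreserving_sub_left p).quasiMeasurePreserving
  calc ∫⁻ k, f k ^ a * f (p - k) ^ b ∂μ
      ≤ (∫⁻ k, f k ∂μ) ^ a * (∫⁻ k, f (p - k) ∂μ) ^ b :=
        ENNReal.lintegral_mul_norm_pow_le hf hf_sub ha hb hab
    _ = ∫⁻ k, f k ∂μ := by
        rw [lintegral_sub_left_eq_self, ← ENNReal.rpow_add_of_nonneg _ _ ha hb, hab,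
          ENNReal.rpow_one]

theorem lintegral_one_add_norm_sq_rpow_mul_le {E : Type*} [SeminormedAddCommGroup E]
    [MeasurableSpace E] [BorelSpace E] {μ : Measure E} [μ.IsNegInvariant] [μ.IsAddLeftInvariant]
    {s t : ℝ} (hs : 0 ≤ s) (ht : 0 ≤ t) (p : E) :
    ∫⁻ k, ENNReal.ofReal ((1 + ‖k‖ ^ 2) ^ (-s / 2) * (1 + ‖p - k‖ ^ 2) ^ (-t / 2)) ∂μ ≤
      ∫⁻ k, ENNReal.ofReal ((1 + ‖k‖ ^ 2) ^ (-(s + t) / 2)) ∂μ := by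
  rcases (add_nonneg hs ht).eq_or_lt with hst | hst
  · obtain ⟨rfl, rfl⟩ := (add_eq_zero_iff_of_nonneg hs ht).1 hst.symm
    simp
  let f : E → ℝ≥0∞ := fun k ↦ ENNReal.ofReal ((1 + ‖k‖ ^ 2) ^ (-(s + t) / 2))
  have hf : AEMeasurable f μ := by fun_prop
  have f_rpow (r : ℝ) (hr : 0 ≤ r) (k : E) :
      f k ^ (r / (s + t)) = ENNReal.ofReal ((1 + ‖k‖ ^ 2) ^ (-r / 2)) := by
    rw [ENNReal.ofReal_rpow_of_nonneg (by positivity) (by positivity),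
      ← Real.rpow_mul (by positivity)]
    congr 2
    field_simp
  calc ∫⁻ k, ENNReal.ofReal ((1 + ‖k‖ ^ 2) ^ (-s / 2) * (1 + ‖p - k‖ ^ 2) ^ (-t / 2)) ∂μ
      = ∫⁻ k, f k ^ (s / (s + t)) * f (p - k) ^ (t / (s + t)) ∂μ := by
        refine lintegral_congr fun k ↦ ?_
        rw [f_rpow s hs, f_rpow t ht, ENNReal.ofReal_mul (by positivity)]
    _ ≤ ∫⁻ k, f k ∂μ :=
        lintegral_rpow_mul_rpow_sub_left_le hf (by positivity) (by positivity) (by field_simp) p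

theorem inv_sqrt_mul_add_sqrt_le_rpow {x : ℝ} (hx : 0 ≤ x) :
    (√(1 + x) * (x + √(1 + x)))⁻¹ ≤ (1 + x) ^ (-(3 : ℝ) / 2) := by
  have one_le_sqrt : 1 ≤ √(1 + x) := Real.one_le_sqrt.2 (by linarith)
  calc (√(1 + x) * (x + √(1 + x)))⁻¹ ≤ (√(1 + x) * (1 + x))⁻¹ := by
        rw [add_comm x]
        gcongr
    _ = (1 + x) ^ (-(3 : ℝ) / 2) := by
        rw [Real.sqrt_eq_rpow, ← Real.rpow_add_one (by positivity), ← Real.rpow_neg (by positivity)]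
        norm_num

theorem G0B0_convolution_bound_general {E : Type*} [NormedAddCommGroup E] [NormedSpace ℝ E]
    [FiniteDimensional ℝ E] [MeasurableSpace E] [BorelSpace E] (μ : Measure E) [μ.IsAddHaarMeasure]
    (hE : Module.finrank ℝ E < 4) :
    ∃ C > 0, ∀ p : E,
      ∫⁻ k, ENNReal.ofReal ((√(1 + ‖k‖ ^ 2) * (‖k‖ ^ 2 + √(1 + ‖k‖ ^ 2)))⁻¹ *
        (1 + ‖p - k‖ ^ 2) ^ (-(1 : ℝ) / 2)) ∂μ ≤ ENNReal.ofReal C := by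
  let f : E → ℝ := fun k ↦ (1 + ‖k‖ ^ 2) ^ (-(3 + 1 : ℝ) / 2)
  have hf : Integrable f μ :=
    integrable_rpow_neg_one_add_norm_sq (by norm_num; exact_mod_cast hE)
  have hf_cont : Continuous f :=
    Continuous.rpow_const (by fun_prop) fun k ↦ .inl (by positivity)
  have hf_pos : 0 < ∫ k, f k ∂μ :=
    integral_pos_of_integrable_nonneg_nonzero (x := 0) hf_cont hf (fun k ↦ by positivity)
      (by simp [f])
  refine ⟨∫ k, f k ∂μ, hf_pos, fun p ↦ ?_⟩
  calc ∫⁻ k, ENNReal.ofReal ((√(1 + ‖k‖ ^ 2) * (‖k‖ ^ 2 + √(1 + ‖k‖ ^ 2)))⁻¹ *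
          (1 + ‖p - k‖ ^ 2) ^ (-(1 : ℝ) / 2)) ∂μ
      ≤ ∫⁻ k, ENNReal.ofReal ((1 + ‖k‖ ^ 2) ^ (-(3 : ℝ) / 2) *
          (1 + ‖p - k‖ ^ 2) ^ (-(1 : ℝ) / 2)) ∂μ := by
        gcongr with k
        exact inv_sqrt_mul_add_sqrt_le_rpow (by positivity)
    _ ≤ ∫⁻ k, ENNReal.ofReal (f k) ∂μ :=
        lintegral_one_add_norm_sq_rpow_mul_le (by norm_num) (by norm_num) p
    _ = ENNReal.ofReal (∫ k, f k ∂μ) :=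
        (ofReal_integral_eq_lintegral_ofReal hf (.of_forall fun k ↦ by positivity)).symm

/-- There is `C > 0` such that for every `p ∈ ℝ³`,
`∫ (ω(k)·(|k|²+ω(k)))^{−1}·(1+|p−k|²)^{−1/2} dk ≤ C`; i.e.
`sup_p ∫ G₀(k)B₀(k)(1+|p−k|²)^{−1/2} dk < ∞` with `G₀(k) = ω(k)^{−1/2}`. -/
theorem G0B0_convolution_bound :
    ∃ C > 0, ∀ p : EuclideanSpace ℝ (Fin 3),
      ∫⁻ k, ENNReal.ofReal
          ((ω k * (‖k‖ ^ 2 + ω k))⁻¹ * (1 + ‖p - k‖ ^ 2) ^ (-(1 : ℝ) / 2)) ≤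
        ENNReal.ofReal C :=
  G0B0_convolution_bound_general volume (by simp)

end
end
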